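/- Let V be a congruence distributive variety. Then for every n ≥ 2 the n-commutator is neutral in V: for every A ∈ V and all congruences α₁,…,αₙ of A, [α₁,…,αₙ] = α₁∧⋯∧αₙ. -/

import Mathlib

set_option autoImplicit false

namespace UA

/-- A signature: a type of operation symbols, each with a finite arity. -/
structure Signature : Type 1 where
  ops : Type
  arity : ops → ℕ

/-- An algebra for a signature: a carrier set together with an interpretation
of every operation symbol. -/
structure Algebra (σ : Signature) : Type 1 where
  carrier : Type
  interp : (o : σ.ops) → (Fin (σ.arity o) → carrier) → carrier

variable {σ : Signature}

/-- A congruence of an algebra: an equivalence relation compatible with all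
basic operations. -/
structure Con (A : Algebra σ) : Type where
  r : A.carrier → A.carrier → Prop
  refl : ∀ a, r a a
  symm : ∀ {a b}, r a b → r b a
  trans : ∀ {a b c}, r a b → r b c → r a c
  compat : ∀ (o : σ.ops) (x y : Fin (σ.arity o) → A.carrier),
      (∀ i, r (x i) (y i)) → r (A.interp o x) (A.interp o y)

namespace Con

variable {A : Algebra σ}

instance : LE (Con A) := ⟨fun c d => ∀ a b : A.carrier, c.r a b → d.r a b⟩
instance : LT (Con A) := ⟨fun c d => c ≤ d ∧ ¬ d ≤ c⟩

/-- The total congruence `1_A`. -/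
def top : Con A where
  r := fun _ _ => True
  refl := fun _ => trivial
  symm := fun _ => trivial
  trans := fun _ _ => trivial
  compat := fun _ _ _ _ => trivial

/-- The identity congruence `0_A`. -/
def bot : Con A where
  r := fun a b => a = b
  refl := fun _ => rfl
  symm := fun h => h.symm
  trans := fun h h' => h.trans h'
  compat := fun o _ _ h => congrArg (A.interp o) (funext h)

/-- Meet of an arbitrary family of congruences (intersection). -/
def sInf (S : Set (Con A)) : Con A where
  r a b := ∀ c ∈ S, c.r a b
  refl a c _ := c.refl a
  symm h c hc := c.symm (h c hc)
  trans h h' c hc := c.trans (h c hc) (h' c hc)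
  compat o x y h c hc := c.compat o x y (fun i => h i c hc)

/-- Binary meet of congruences. -/
def inf (c d : Con A) : Con A where
  r a b := c.r a b ∧ d.r a b
  refl a := ⟨c.refl a, d.refl a⟩
  symm h := ⟨c.symm h.1, d.symm h.2⟩
  trans h h' := ⟨c.trans h.1 h'.1, d.trans h.2 h'.2⟩
  compat o x y h := ⟨c.compat o x y fun i => (h i).1, d.compat o x y fun i => (h i).2⟩

/-- The congruence generated by a set of pairs. -/
def conGen (S : Set (A.carrier × A.carrier)) : Con A :=
  sInf {c : Con A | ∀ p ∈ S, c.r p.1 p.2}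

/-- Binary join of congruences. -/
def sup (c d : Con A) : Con A := conGen {p | c.r p.1 p.2 ∨ d.r p.1 p.2}

/-- Join of a family of congruences. -/
def iSup {I : Type} (f : I → Con A) : Con A := conGen {p | ∃ i, (f i).r p.1 p.2}

/-- Composition of congruences as binary relations. -/
def comp (c d : Con A) (a b : A.carrier) : Prop := ∃ x, c.r a x ∧ d.r x b

/-- `d` covers `c` in the congruence lattice. -/
def Covers (c d : Con A) : Prop := c < d ∧ ∀ e : Con A, c < e → e ≤ d → e = d

theorem le_sup_right {c d : Con A} : d ≤ sup c d :=
  fun a b h e he => he (a, b) (Or.inr h)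

def toSetoid (c : Con A) : Setoid A.carrier := ⟨c.r, ⟨c.refl, c.symm, c.trans⟩⟩

end Con

/-- The quotient algebra `A/γ`. -/
noncomputable def quotAlg (A : Algebra σ) (γ : Con A) : Algebra σ where
  carrier := Quotient γ.toSetoid
  interp o x := Quotient.mk γ.toSetoid (A.interp o (fun i => (x i).out))

/-- The quotient congruence `α/γ` for `γ ≤ α`. -/
noncomputable def Con.quot {A : Algebra σ} (α γ : Con A) (h : γ ≤ α) : Con (quotAlg A γ) where
  r x y := Quotient.liftOn₂ x y (fun a b => α.r a b)
    (fun a b a' b' ha hb => propext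
      ⟨fun hr => α.trans (α.symm (h _ _ ha)) (α.trans hr (h _ _ hb)),
       fun hr => α.trans (h _ _ ha) (α.trans hr (α.symm (h _ _ hb)))⟩)
  refl x := Quotient.inductionOn x fun a => α.refl a
  symm {x y} h' := Quotient.inductionOn₂ x y (fun _ _ hab => α.symm hab) h'
  trans {x y z} h1 h2 :=
    Quotient.inductionOn₃ x y z (fun _ _ _ hab hbc => α.trans hab hbc) h1 h2
  compat o x y hxy := by
    show α.r (A.interp o fun i => (x i).out) (A.interp o fun i => (y i).out)
    refine α.compat o _ _ fun i => ?_
    have h1 := hxy i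
    rw [← Quotient.out_eq (x i), ← Quotient.out_eq (y i)] at h1
    exact h1

/-- The polynomial operations of an algebra: the clone generated by the basic
operations, the projections and the constants. -/
inductive IsPolynomial (A : Algebra σ) : {n : ℕ} → ((Fin n → A.carrier) → A.carrier) → Prop
  | proj {n : ℕ} (i : Fin n) : IsPolynomial A (fun x => x i)
  | const {n : ℕ} (a : A.carrier) : IsPolynomial A (fun _ : Fin n → A.carrier => a)
  | app {n : ℕ} (o : σ.ops) (g : Fin (σ.arity o) → (Fin n → A.carrier) → A.carrier) :
      (∀ j, IsPolynomial A (g j)) → IsPolynomial A (fun x => A.interp o (fun j => g j x))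

/-- Substituting, coordinatewise according to the grouping `g` and the choice
vector `ε`, the entries of `b` (where `ε` is `true`) or of `a` (where `ε` is `false`). -/
def chooseVec {β : Type} {N n : ℕ} (g : Fin N → Fin n) (a b : Fin N → β)
    (ε : Fin n → Bool) : Fin N → β :=
  fun i => if ε (g i) then b i else a i

/-- The higher centralizer relation `C(α₁,…,αₙ,β;δ)` of Bulatov.  Polynomials with
grouped variables are modelled by a polynomial `p` of arity `N` together with a
grouping map `g : Fin N → Fin (n+1)`; the group `Fin.last n` is the `β`-group. -/
def Centralizes {A : Algebra σ} {n : ℕ} (α : Fin n → Con A) (β δ : Con A) : Prop :=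
  ∀ (N : ℕ) (p : (Fin N → A.carrier) → A.carrier), IsPolynomial A p →
    ∀ (g : Fin N → Fin (n + 1)) (a b : Fin N → A.carrier),
      (∀ i, (Fin.lastCases (motive := fun _ => Con A) β α (g i)).r (a i) (b i)) →
      (∀ ε : Fin n → Bool, ε ≠ (fun _ => true) →
        δ.r (p (chooseVec g a b (Fin.lastCases (motive := fun _ => Bool) false ε)))
            (p (chooseVec g a b (Fin.lastCases (motive := fun _ => Bool) true ε)))) →
      δ.r (p (chooseVec g a b (Fin.lastCases (motive := fun _ => Bool) false fun _ => true)))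
          (p (chooseVec g a b (Fin.lastCases (motive := fun _ => Bool) true fun _ => true)))

/-- The higher commutator `[α₁,…,αₙ,β]`: the smallest congruence `δ` such that
`C(α₁,…,αₙ,β;δ)` holds. -/
def commutator {A : Algebra σ} {n : ℕ} (α : Fin n → Con A) (β : Con A) : Con A :=
  Con.sInf {δ : Con A | Centralizes α β δ}

/-- The higher commutator of a nonempty list of congruences, with the convention
`[α] = α` for a single congruence. -/
def commList {A : Algebra σ} : {n : ℕ} → (Fin (n + 1) → Con A) → Con A
  | 0, γ => γ 0
  | (n+1), γ => commutator (fun j : Fin (n+1) => γ j.castSucc) (γ (Fin.last (n+1)))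

/-- The `m`-fold commutator `[θ,…,θ]_m` (for `m ≥ 1`). -/
def nfold {A : Algebra σ} (θ : Con A) (m : ℕ) : Con A :=
  commList (fun _ : Fin (m - 1 + 1) => θ)

/-- The binary commutator `[c,d]`. -/
def binComm {A : Algebra σ} (c d : Con A) : Con A := commutator (fun _ : Fin 1 => c) d

/-- The lower central series `(θ]ⁿ`. -/
def lcs {A : Algebra σ} (θ : Con A) : ℕ → Con A
  | 0 => θ
  | (k+1) => binComm θ (lcs θ k)

/-- The derived series `[θ]ⁿ`. -/
def derived {A : Algebra σ} (θ : Con A) : ℕ → Con A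
  | 0 => θ
  | (k+1) => binComm (derived θ k) (derived θ k)

/-- An algebra is nilpotent if some term of the lower central series of `1_A` is `0_A`. -/
def Nilpotent (A : Algebra σ) : Prop := ∃ m, lcs (Con.top : Con A) m = Con.bot

/-- An algebra is nilpotent of class `n` if `(1_A]ⁿ = 0_A`. -/
def NilpotentOfClass (A : Algebra σ) (n : ℕ) : Prop := lcs (Con.top : Con A) n = Con.bot

/-- A congruence is solvable if some term of its derived series is `0_A`. -/
def SolvableCon {A : Algebra σ} (θ : Con A) : Prop := ∃ m, derived θ m = Con.bot

/-- `A` is `n`-supernilpotent if `[1_A,…,1_A]_n = 0_A`. -/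
def Supernilpotent (A : Algebra σ) (n : ℕ) : Prop := nfold (Con.top : Con A) n = Con.bot

/-- A polynomial `f` absorbs the tuple `a` to the element `c`. -/
def Absorbs (A : Algebra σ) {k : ℕ} (f : (Fin k → A.carrier) → A.carrier)
    (a : Fin k → A.carrier) (c : A.carrier) : Prop :=
  ∀ b : Fin k → A.carrier, (∃ i, b i = a i) → f b = c

/-- Terms over a signature with variables in `X`. -/
inductive Term (σ : Signature) (X : Type) : Type
  | var : X → Term σ X
  | app : (o : σ.ops) → (Fin (σ.arity o) → Term σ X) → Term σ X

/-- Evaluation of a term in an algebra under an assignment of the variables. -/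
def Term.eval {X : Type} (A : Algebra σ) (v : X → A.carrier) : Term σ X → A.carrier
  | Term.var x => v x
  | Term.app o t => A.interp o fun i => Term.eval A v (t i)

/-- Substitution of terms into a term. -/
def Term.subst {X Y : Type} : Term σ X → (X → Term σ Y) → Term σ Y
  | Term.var x, s => s x
  | Term.app o t, s => Term.app o fun i => Term.subst (t i) s

/-- `A` possesses a Mal'cev term. -/
def HasMalcevTerm (A : Algebra σ) : Prop :=
  ∃ t : Term σ (Fin 3), ∀ a b : A.carrier,
    t.eval A ![a, b, b] = a ∧ t.eval A ![b, b, a] = a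

/-- A class of algebras is a variety when it is the class of all models of a set
of identities. -/
def IsVariety (V : Algebra σ → Prop) : Prop :=
  ∃ E : Set (Term σ ℕ × Term σ ℕ),
    ∀ A : Algebra σ, V A ↔ ∀ e ∈ E, ∀ v : ℕ → A.carrier, e.1.eval A v = e.2.eval A v

/-- Two terms are `V`-equivalent when they evaluate equally in every member of `V`. -/
def vSetoid (V : Algebra σ → Prop) (X : Type) : Setoid (Term σ X) where
  r t s := ∀ A : Algebra σ, V A → ∀ v : X → A.carrier, t.eval A v = s.eval A v
  iseqv := ⟨fun _ _ _ _ => rfl, fun h A hA v => (h A hA v).symm,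
    fun h h' A hA v => (h A hA v).trans (h' A hA v)⟩

/-- The `V`-free algebra on the set `X` of generators. -/
noncomputable def freeAlg (V : Algebra σ → Prop) (X : Type) : Algebra σ where
  carrier := Quotient (vSetoid V X)
  interp o x := Quotient.mk (vSetoid V X) (Term.app o fun i => (x i).out)

/-- The principal congruence `θ(a,b)` generated by the pair `(a,b)`. -/
def conPair (A : Algebra σ) (a b : A.carrier) : Con A := Con.conGen {(a, b)}

/-- A weak difference term for the class `V`. -/
def IsWeakDiffTerm (V : Algebra σ → Prop) (c : Term σ (Fin 3)) : Prop :=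
  ∀ A : Algebra σ, V A → ∀ a b : A.carrier,
    (binComm (conPair A a b) (conPair A a b)).r (c.eval A ![a, b, b]) a ∧
    (binComm (conPair A a b) (conPair A a b)).r a (c.eval A ![b, b, a])

/-- A weak `n`-difference term for the class `V`. -/
def IsWeakNDiffTerm (V : Algebra σ → Prop) (n : ℕ) (c : Term σ (Fin 3)) : Prop :=
  ∀ A : Algebra σ, V A → ∀ a b : A.carrier,
    (nfold (conPair A a b) n).r (c.eval A ![a, b, b]) a ∧
    (nfold (conPair A a b) n).r a (c.eval A ![b, b, a])

/-- Order-preserving maps on the congruence lattice. -/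
def MonotoneCon {A : Algebra σ} (F : Con A → Con A) : Prop :=
  ∀ c d : Con A, c ≤ d → F c ≤ F d

/-- `p` is a weak `f`-term of `A` with respect to the interpretation `F`. -/
def IsWeakFTerm (A : Algebra σ) (F : Con A → Con A) (p : Term σ (Fin 3)) : Prop :=
  ∀ (θ : Con A) (a b : A.carrier), θ.r a b →
    (F θ).r (p.eval A ![a, b, b]) a ∧ (F θ).r a (p.eval A ![b, b, a])

/-- `p` is a weak `f`-term for the class `V`. -/
def HasWeakFTermVariety (V : Algebra σ → Prop) (p : Term σ (Fin 3)) : Prop :=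
  ∀ A : Algebra σ, V A → ∃ F : Con A → Con A, MonotoneCon F ∧ IsWeakFTerm A F p

/-- The set `T^θ_{n,f}(θ₁,…,θₙ)` of pairs coming from polynomials which
`f(θ)`-absorb on the cube `{ā₁,b̄₁}×⋯×{āₙ,b̄ₙ}`. -/
def TSet (A : Algebra σ) (F : Con A → Con A) (θ : Con A) {n : ℕ} (θs : Fin n → Con A) :
    Set (A.carrier × A.carrier) :=
  {pr | ∃ (N : ℕ) (g : (Fin N → A.carrier) → A.carrier), IsPolynomial A g ∧
    ∃ (gr : Fin N → Fin n) (a b : Fin N → A.carrier),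
      (∀ i, (θs (gr i)).r (a i) (b i)) ∧
      (∀ ε : Fin n → Bool, (∃ j, ε j = false) →
        (F θ).r (g (fun i => if ε (gr i) then b i else a i)) (g a)) ∧
      pr = (g b, g a)}

/-- Homomorphisms of algebras. -/
def IsHom (A B : Algebra σ) (h : A.carrier → B.carrier) : Prop :=
  ∀ (o : σ.ops) (x : Fin (σ.arity o) → A.carrier),
    h (A.interp o x) = B.interp o (fun i => h (x i))

/-- The product of a family of algebras. -/
def prodAlg {I : Type} (As : I → Algebra σ) : Algebra σ where
  carrier := ∀ i, (As i).carrier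
  interp o x i := (As i).interp o (fun j => x j i)

/-- The subuniverse generated by a subset. -/
inductive Gen (A : Algebra σ) (S : Set A.carrier) : A.carrier → Prop
  | base {a : A.carrier} : a ∈ S → Gen A S a
  | app (o : σ.ops) (x : Fin (σ.arity o) → A.carrier) :
      (∀ i, Gen A S (x i)) → Gen A S (A.interp o x)

/-- `A` possesses a Taylor term. -/
def HasTaylorTerm (A : Algebra σ) : Prop :=
  ∃ (n : ℕ) (t : Term σ (Fin n)), 1 ≤ n ∧
    (∀ a : A.carrier, t.eval A (fun _ => a) = a) ∧
    ∀ i : Fin n, ∃ u v : Fin n → Bool, u i = true ∧ v i = false ∧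
      ∀ x y : A.carrier,
        t.eval A (fun j => if u j then x else y) = t.eval A (fun j => if v j then x else y)

/-- The variety `V` possesses a Taylor term. -/
def VarietyHasTaylorTerm (V : Algebra σ → Prop) : Prop :=
  ∃ (n : ℕ) (t : Term σ (Fin n)), 1 ≤ n ∧
    (∀ A : Algebra σ, V A → ∀ a : A.carrier, t.eval A (fun _ => a) = a) ∧
    ∀ i : Fin n, ∃ u v : Fin n → Bool, u i = true ∧ v i = false ∧
      ∀ A : Algebra σ, V A → ∀ x y : A.carrier,
        t.eval A (fun j => if u j then x else y) = t.eval A (fun j => if v j then x else y)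

/-- `Ξ(θ)`: the smallest set of congruences containing `θ` and closed under
higher commutators (of arity at least 2) of its members. -/
inductive Xi {A : Algebra σ} (θ : Con A) : Con A → Prop
  | base : Xi θ θ
  | comm {k : ℕ} (γ : Fin (k + 2) → Con A) : (∀ j, Xi θ (γ j)) → Xi θ (commList γ)

/-- An expanded loop on the carrier `α` with extra operations indexed by `ι`. -/
structure ExpLoop (ι : Type) (ar : ι → ℕ) (α : Type) : Type where
  mul : α → α → α
  ldiv : α → α → α
  rdiv : α → α → α
  zero : α
  extra : (i : ι) → (Fin (ar i) → α) → α
  ldiv_mul : ∀ x y, ldiv x (mul x y) = y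
  mul_rdiv : ∀ x y, rdiv (mul x y) y = x
  mul_ldiv : ∀ x y, mul x (ldiv x y) = y
  rdiv_mul : ∀ x y, mul (rdiv x y) y = x
  zero_mul : ∀ x, mul zero x = x
  mul_zero : ∀ x, mul x zero = x

/-- Operation symbols of an expanded loop. -/
inductive LoopOp (ι : Type) : Type
  | mul | ldiv | rdiv | zero
  | extra : ι → LoopOp ι

/-- The signature of an expanded loop. -/
@[reducible] def loopSig (ι : Type) (ar : ι → ℕ) : Signature where
  ops := LoopOp ι
  arity o := match o with
    | .mul => 2
    | .ldiv => 2
    | .rdiv => 2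
    | .zero => 0
    | .extra i => ar i

/-- The algebra underlying an expanded loop. -/
def ExpLoop.toAlgebra {ι : Type} {ar : ι → ℕ} {α : Type} (L : ExpLoop ι ar α) :
    Algebra (loopSig ι ar) where
  carrier := α
  interp o := match o with
    | .mul => fun x => L.mul (x 0) (x 1)
    | .ldiv => fun x => L.ldiv (x 0) (x 1)
    | .rdiv => fun x => L.rdiv (x 0) (x 1)
    | .zero => fun _ => L.zero
    | .extra i => L.extra i

/-- An expanded loop is of `n`-type. -/
def ExpLoop.IsNType {ι : Type} {ar : ι → ℕ} {α : Type} (L : ExpLoop ι ar α) (n : ℕ) : Prop :=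
  (∀ p : Σ k : ℕ, (Fin k → α) → α,
      (∃ i : ι, p = ⟨ar i, L.extra i⟩) ↔
        (1 ≤ p.1 ∧ p.1 ≤ n - 1 ∧ IsPolynomial L.toAlgebra p.2 ∧
          Absorbs L.toAlgebra p.2 (fun _ => L.zero) L.zero)) ∧
  (∀ f : (Fin (n - 1) → α) → α,
      IsPolynomial L.toAlgebra f → Absorbs L.toAlgebra f (fun _ => L.zero) L.zero →
      ∀ (j : Fin (n - 1)) (x : Fin (n - 1) → α) (u v : α),
        f (Function.update x j (L.mul u v)) =
          L.mul (f (Function.update x j u)) (f (Function.update x j v))) ∧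
  (∀ k : ℕ, 2 ≤ k → k < n →
      commList (Fin.snoc (fun _ : Fin (n - k) => (Con.top : Con L.toAlgebra))
        (nfold Con.top k)) = Con.bot)

/-- `A` is polynomially equivalent to an `n`-type expanded loop on the same carrier. -/
def PolyEquivNTypeLoop (A : Algebra σ) (n : ℕ) : Prop :=
  ∃ (ι : Type) (ar : ι → ℕ) (L : ExpLoop ι ar A.carrier),
    L.IsNType n ∧
    ∀ (k : ℕ) (f : (Fin k → A.carrier) → A.carrier),
      IsPolynomial A f ↔ IsPolynomial L.toAlgebra f

/-- Left-associated product of a list with initial value `c`. -/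
def lprodFrom {β : Type} (mul : β → β → β) (c : β) (l : List β) : β := List.foldl mul c l

/-- Left-associated product of a list (with a default value for the empty list). -/
def lprodList {β : Type} (mul : β → β → β) (dflt : β) : List β → β
  | [] => dflt
  | a :: l => List.foldl mul a l

/-- Left-associated product of a nonempty tuple. -/
def lassoc {β : Type} (mul : β → β → β) : {m : ℕ} → (Fin (m + 1) → β) → β
  | 0, y => y 0
  | (m+1), y => mul (lassoc mul (Fin.init y)) (y (Fin.last (m+1)))

/-- `A` has a representation of degree `n`. -/
def HasRepOfDegree (A : Algebra σ) (n : ℕ) : Prop :=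
  ∃ (z : A.carrier) (r : (Fin 2 → A.carrier) → A.carrier),
    IsPolynomial A r ∧ (∀ x : A.carrier, r ![z, x] = x) ∧ (∀ x : A.carrier, r ![x, z] = x) ∧
    ∀ (k : ℕ) (f : (Fin k → A.carrier) → A.carrier), IsPolynomial A f →
      ∃ (c : A.carrier) (R : ℕ → (Fin k → A.carrier) → A.carrier),
        (∀ m : ℕ, 1 ≤ m → m ≤ min k n →
          ∃ (l : List (Finset (Fin k)))
            (t : (S : Finset (Fin k)) → (Fin S.card → A.carrier) → A.carrier),
            l.Nodup ∧
            (∀ S : Finset (Fin k), S ∈ l ↔ S.card = m) ∧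
            (∀ S ∈ l, IsPolynomial A (t S) ∧ Absorbs A (t S) (fun _ => z) z) ∧
            (∀ x : Fin k → A.carrier,
              R m x = lprodList (fun u v => r ![u, v]) z
                (l.map (fun S => t S (fun j => x ((S.orderIsoOfFin rfl j).val)))))) ∧
        ∀ x : Fin k → A.carrier,
          f x = lprodFrom (fun u v => r ![u, v]) c
            ((List.range' 1 (min k n)).map (fun m => R m x))

/-- Products of `0`-absorbing polynomials (of arities between `lo` and `hi`)
in a given set of variables. -/
inductive ProdOfAbs {ι : Type} {ar : ι → ℕ} {α : Type} (L : ExpLoop ι ar α)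
    (lo hi : ℕ) {I : Type} : ((I → α) → α) → Prop
  | base {p : ℕ} (h : (Fin p → α) → α) (sel : Fin p → I) :
      lo ≤ p → p ≤ hi → IsPolynomial L.toAlgebra h →
      Absorbs L.toAlgebra h (fun _ => L.zero) L.zero →
      ProdOfAbs L lo hi (fun v => h (fun j => v (sel j)))
  | mul {F G : (I → α) → α} :
      ProdOfAbs L lo hi F → ProdOfAbs L lo hi G →
      ProdOfAbs L lo hi (fun v => L.mul (F v) (G v))

/-- The terms `q_m` (for `m ≥ 2`, `qSeq q (m-2)` is `q_m`):
`q₂ := q`, `q_{m+1}(x,y,z) := q(x, q_m(x,y,y), q_m(x,y,z))`. -/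
def qSeq (q : Term σ (Fin 3)) : ℕ → Term σ (Fin 3)
  | 0 => q
  | (k+1) => q.subst ![Term.var 0, (qSeq q k).subst ![Term.var 0, Term.var 1, Term.var 1], qSeq q k]

/-!
The commutator always lies below the meet, so let `a` and `b` be related by every `αⱼ` and suppose
that `C(α₁,…,αₘ,β;δ)` holds. If `t` is a Jónsson term, then `t(a,x,y)` does not depend on `x` at
`y = a`. Hence substituting `t(a,x,yⱼ)` for `x` in a polynomial `p(y₁,…,yₘ,x)` makes it independent
of `x` at `yⱼ = a`, and once this has been done for every `j`, the centralizer condition gives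
`p(b,…,b,a) δ p(b,…,b,b)`. The Jónsson identities chain the pairs `t(a,a,b), t(a,b,b)` from `a`
to `b`, so the substitutions can be undone one at a time, down to `p = x`, which yields `a δ b`.
-/

theorem reflTransGen_map_pi {ι β γ : Type*} [Finite ι] [DecidableEq ι] {R : β → β → Prop}
    {S : γ → γ → Prop} {f : (ι → β) → γ}
    (hf : ∀ x i u w, R u w → S (f (Function.update x i u)) (f (Function.update x i w)))
    {x y : ι → β} (hxy : ∀ i, Relation.ReflTransGen R (x i) (y i)) :
    Relation.ReflTransGen S (f x) (f y) := by
  have := Fintype.ofFinite ι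
  have piecewise (s : Finset ι) : Relation.ReflTransGen S (f x) (f (s.piecewise y x)) := by
    induction s using Finset.induction_on with
    | empty => rw [Finset.piecewise_empty]
    | insert i s hi ih =>
      have hstep := (hxy i).lift (fun u => f (Function.update (s.piecewise y x) i u)) (hf _ i)
      have hx : Function.update (s.piecewise y x) i (x i) = s.piecewise y x :=
        Function.update_eq_self_iff.2 (Finset.piecewise_eq_of_notMem s y x hi).symm
      rw [Function.onFun, hx, ← Finset.piecewise_insert] at hstep
      exact ih.trans hstep
  simpa using piecewise Finset.univ

namespace Con

variable {A : Algebra σ}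

theorem ext {c d : Con A} (h : ∀ a b, c.r a b ↔ d.r a b) : c = d := by
  have hr : c.r = d.r := funext₂ fun a b => propext (h a b)
  cases c
  cases d
  congr

theorem sInf_range_r {ι : Sort*} {α : ι → Con A} {a b : A.carrier} :
    (sInf (Set.range α)).r a b ↔ ∀ i, (α i).r a b :=
  Set.forall_mem_range

theorem sInf_range_fin_succ {n : ℕ} (α : Fin (n + 1) → Con A) :
    sInf (Set.range α) = inf (sInf (Set.range fun j : Fin n => α j.castSucc)) (α (Fin.last n)) :=
  ext fun _ _ => by
    rw [sInf_range_r, Fin.forall_fin_succ']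
    exact and_congr_left' sInf_range_r.symm

theorem rel_interp_update (c : Con A) {o : σ.ops} {x : Fin (σ.arity o) → A.carrier}
    {i : Fin (σ.arity o)} {u w : A.carrier} (h : c.r u w) :
    c.r (A.interp o (Function.update x i u)) (A.interp o (Function.update x i w)) := by
  refine c.compat o _ _ fun k => ?_
  obtain rfl | hk := eq_or_ne k i
  · simpa only [Function.update_self] using h
  · simpa only [Function.update_of_ne hk] using c.refl (x k)

/-- The join of two congruences in its concrete form, the relation of being connected by a finite
chain of links from either congruence; `Con.sup` is the intersection of all upper bounds. -/
def chain (c d : Con A) : Con A where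
  r := Relation.ReflTransGen fun u w => c.r u w ∨ d.r u w
  refl _ := .refl
  symm h :=
    have : Std.Symm fun u w => c.r u w ∨ d.r u w := ⟨fun _ _ h => h.imp c.symm d.symm⟩
    Std.Symm.symm _ _ h
  trans := .trans
  compat _ _ _ := reflTransGen_map_pi fun _ _ _ _ h => h.imp c.rel_interp_update d.rel_interp_update

theorem sup_le_chain (c d : Con A) : sup c d ≤ chain c d :=
  fun _ _ h => h (chain c d) fun _ hp => .single hp

end Con

section FreeAlgebra

variable {V : Algebra σ → Prop} {X : Type} {A B : Algebra σ}

theorem IsHom.map_eval {h : A.carrier → B.carrier} (hh : IsHom A B h) (t : Term σ X)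
    (v : X → A.carrier) : h (t.eval A v) = t.eval B fun x => h (v x) := by
  induction t with
  | var x => rfl
  | app o t ih => exact (hh o _).trans (congrArg _ (funext ih))

/-- The homomorphism from the `V`-free algebra to a member of `V` that extends an assignment of the
generators. -/
def freeLift (hA : V A) (v : X → A.carrier) : (freeAlg V X).carrier → A.carrier :=
  Quotient.lift (fun t => t.eval A v) fun _ _ h => h A hA v

theorem isHom_freeLift (hA : V A) (v : X → A.carrier) :
    IsHom (freeAlg V X) A (freeLift hA v) := fun o x =>
  congrArg (A.interp o) <| funext fun i => congrArg (freeLift hA v) (Quotient.out_eq (x i))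

theorem freeAlg_ext {p q : (freeAlg V X).carrier}
    (h : ∀ (A : Algebra σ) (hA : V A) (v : X → A.carrier), freeLift hA v p = freeLift hA v q) :
    p = q := by
  induction p, q using Quotient.inductionOn₂ with
  | h s t => exact Quotient.sound h

theorem freeAlg_mem (hV : IsVariety V) (X : Type) : V (freeAlg V X) := by
  obtain ⟨E, hE⟩ := hV
  refine (hE _).2 fun e he v => freeAlg_ext fun A hA w => ?_
  rw [(isHom_freeLift hA w).map_eval, (isHom_freeLift hA w).map_eval]
  exact (hE A).1 hA e he _

/-- The congruence of the `V`-free algebra that identifies the generators `i` and `j`, described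
semantically: two elements are related if the identity obtained by setting `xᵢ = xⱼ` holds
in `V`. -/
def identifyCon (V : Algebra σ → Prop) (i j : X) : Con (freeAlg V X) where
  r p q := ∀ (A : Algebra σ) (hA : V A) (v : X → A.carrier), v i = v j →
    freeLift hA v p = freeLift hA v q
  refl _ _ _ _ _ := rfl
  symm h A hA v hv := (h A hA v hv).symm
  trans h h' A hA v hv := (h A hA v hv).trans (h' A hA v hv)
  compat o x y h A hA v hv := by
    rw [isHom_freeLift hA v o x, isHom_freeLift hA v o y]
    exact congrArg _ (funext fun k => h k A hA v hv)

theorem identifyCon_var (V : Algebra σ → Prop) (i j : X) :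
    (identifyCon V i j).r (Quotient.mk _ (.var i)) (Quotient.mk _ (.var j)) :=
  fun _ _ _ hv => hv

end FreeAlgebra

section Jonsson

/-- The congruence lattice of `A` is distributive. -/
def CongruenceDistributive (A : Algebra σ) : Prop :=
  ∀ α β γ : Con A, Con.inf α (Con.sup β γ) = Con.sup (Con.inf α β) (Con.inf α γ)

/-- `t` can follow `s` in a sequence of Jónsson terms for `V`. Either of the two linking identities
is allowed at any place, instead of the one prescribed by the parity of the place; repeating terms
turns such a sequence into an alternating one. -/
structure JonssonStep (V : Algebra σ → Prop) (s t : Term σ (Fin 3)) : Prop where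
  eval_outer : ∀ A : Algebra σ, V A → ∀ x y : A.carrier, t.eval A ![x, y, x] = x
  eval_link :
    (∀ A : Algebra σ, V A → ∀ x z : A.carrier, s.eval A ![x, x, z] = t.eval A ![x, x, z]) ∨
    (∀ A : Algebra σ, V A → ∀ x z : A.carrier, s.eval A ![x, z, z] = t.eval A ![x, z, z])

/-- `V` has Jónsson terms: a sequence of terms from `x` to `z` linked by the Jónsson identities. -/
def HasJonssonTerms (V : Algebra σ → Prop) : Prop :=
  Relation.ReflTransGen (JonssonStep V) (.var 0) (.var 2)

variable {V : Algebra σ → Prop}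

/-- The Jónsson terms are read off a chain from `x₀` to `x₂` in the free algebra on `x₀, x₁, x₂`
which witnesses that `(x₀, x₂)` lies in `(θ₀₂ ∧ θ₀₁) ∨ (θ₀₂ ∧ θ₁₂)`, where `θᵢⱼ` identifies `xᵢ`
and `xⱼ`. -/
theorem CongruenceDistributive.hasJonssonTerms
    (h : CongruenceDistributive (freeAlg V (Fin 3))) : HasJonssonTerms V := by
  let θ (i j : Fin 3) : Con (freeAlg V (Fin 3)) := identifyCon V i j
  let x (i : Fin 3) : (freeAlg V (Fin 3)).carrier := Quotient.mk _ (.var i)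
  have hmeet : (Con.inf (θ 0 2) (Con.sup (θ 0 1) (θ 1 2))).r (x 0) (x 2) :=
    ⟨identifyCon_var V 0 2, fun e he =>
      e.trans (he (x 0, x 1) (.inl (identifyCon_var V 0 1)))
        (he (x 1, x 2) (.inr (identifyCon_var V 1 2)))⟩
  have hchain : (Con.chain (Con.inf (θ 0 2) (θ 0 1)) (Con.inf (θ 0 2) (θ 1 2))).r (x 0) (x 2) :=
    Con.sup_le_chain _ _ _ _ (h (θ 0 2) (θ 0 1) (θ 1 2) ▸ hmeet)
  suffices H : ∀ q, (Con.chain (Con.inf (θ 0 2) (θ 0 1)) (Con.inf (θ 0 2) (θ 1 2))).r (x 0) q →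
      (θ 0 2).r (x 0) q ∧
        ∀ t, Quotient.mk _ t = q → Relation.ReflTransGen (JonssonStep V) (.var 0) t from
    (H _ hchain).2 _ rfl
  intro q hq
  induction hq with
  | refl =>
    refine ⟨(θ 0 2).refl _, fun t ht => .single ⟨fun A hA u w => ?_, .inl fun A hA u w => ?_⟩⟩
    · exact Quotient.exact ht A hA _
    · exact (Quotient.exact ht A hA _).symm
  | @tail p q _ hpq ih =>
    obtain ⟨s, rfl⟩ := Quotient.exists_rep p
    obtain ⟨hs, hpath⟩ := ih
    have hq : (θ 0 2).r (x 0) q := (θ 0 2).trans hs (hpq.elim And.left And.left)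
    refine ⟨hq, ?_⟩
    rintro t rfl
    refine (hpath s rfl).tail ⟨fun A hA u w => (hq A hA ![u, w, u] rfl).symm, ?_⟩
    exact hpq.imp (fun h A hA u w => h.2 A hA ![u, u, w] rfl)
      fun h A hA u w => h.2 A hA ![u, w, w] rfl

theorem HasJonssonTerms.rel (hJ : HasJonssonTerms V) {A : Algebra σ} (hA : V A)
    (S : Setoid A.carrier) (a b : A.carrier)
    (hS : ∀ t : Term σ (Fin 3), (∀ z, t.eval A ![a, z, a] = a) →
      S (t.eval A ![a, a, b]) (t.eval A ![a, b, b])) :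
    S a b := by
  suffices H : ∀ t, Relation.ReflTransGen (JonssonStep V) (.var 0) t →
      S a (t.eval A ![a, a, b]) ∧ S a (t.eval A ![a, b, b]) from (H _ hJ).1
  intro t ht
  induction ht with
  | refl => exact ⟨S.refl a, S.refl a⟩
  | tail _ hst ih =>
    have hbridge := hS _ (hst.eval_outer A hA a)
    rcases hst.eval_link with h | h
    · have hleft := h A hA a b ▸ ih.1
      exact ⟨hleft, S.trans hleft hbridge⟩
    · have hright := h A hA a b ▸ ih.2
      exact ⟨S.trans hright (S.symm hbridge), hright⟩

end Jonsson

section Polynomials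

variable {A : Algebra σ} {N : ℕ}

theorem IsPolynomial.rel {p : (Fin N → A.carrier) → A.carrier} (hp : IsPolynomial A p) (c : Con A)
    {x y : Fin N → A.carrier} (h : ∀ i, c.r (x i) (y i)) : c.r (p x) (p y) := by
  induction hp with
  | proj i => exact h i
  | const a => exact c.refl a
  | app o g _ ih => exact c.compat o _ _ ih

theorem IsPolynomial.comp {M : ℕ} {p : (Fin N → A.carrier) → A.carrier} (hp : IsPolynomial A p)
    {f : (Fin M → A.carrier) → Fin N → A.carrier} (hf : ∀ i, IsPolynomial A fun v => f v i) :
    IsPolynomial A fun v => p (f v) := by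
  induction hp with
  | proj i => exact hf i
  | const a => exact .const a
  | app o g _ ih => exact .app o (fun j v => g j (f v)) ih

theorem Term.isPolynomial_eval {X : Type} (t : Term σ X) {f : (Fin N → A.carrier) → X → A.carrier}
    (hf : ∀ i, IsPolynomial A fun v => f v i) : IsPolynomial A fun v => t.eval A (f v) := by
  induction t with
  | var i => exact hf i
  | app o t ih => exact .app o (fun j v => (t j).eval A (f v)) ih

end Polynomials

section UpperBound

variable {A : Algebra σ} {n : ℕ}

theorem rel_chooseVec {N : ℕ} (γ : Fin n → Con A) {g : Fin N → Fin n} {a b : Fin N → A.carrier}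
    (hab : ∀ i, (γ (g i)).r (a i) (b i)) {k : Fin n} {ε ε' : Fin n → Bool}
    (hε : ∀ l ≠ k, ε l = ε' l) (i : Fin N) :
    (γ k).r (chooseVec g a b ε i) (chooseVec g a b ε' i) := by
  unfold chooseVec
  obtain rfl | hk := eq_or_ne (g i) k
  · split_ifs
    exacts [(γ _).refl _, (γ _).symm (hab i), hab i, (γ _).refl _]
  · rw [hε _ hk]
    exact (γ k).refl _

variable (α : Fin n → Con A) (β : Con A)

theorem centralizes_right : Centralizes α β β := by
  intro N p hp g a b hab _
  have hlast := rel_chooseVec _ hab (k := Fin.last n)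
    (ε := Fin.lastCases (motive := fun _ => Bool) false fun _ => true)
    (ε' := Fin.lastCases (motive := fun _ => Bool) true fun _ => true) fun l hl => by
      induction l using Fin.lastCases with
      | last => exact absurd rfl hl
      | cast j => simp only [Fin.lastCases_castSucc]
  rw [Fin.lastCases_last] at hlast
  exact hp.rel β hlast

theorem centralizes_left (j : Fin n) : Centralizes α β (α j) := by
  intro N p hp g a b hab hδ
  have hj (c : Bool) : (α j).r
      (p (chooseVec g a b (Fin.lastCases (motive := fun _ => Bool) c fun _ => true)))
      (p (chooseVec g a b (Fin.lastCases (motive := fun _ => Bool) c fun k => k != j))) := by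
    have hcoord := rel_chooseVec _ hab (k := j.castSucc)
      (ε := Fin.lastCases (motive := fun _ => Bool) c fun _ => true)
      (ε' := Fin.lastCases (motive := fun _ => Bool) c fun k => k != j) fun l hl => by
        induction l using Fin.lastCases with
        | last => simp only [Fin.lastCases_last]
        | cast k => simpa using hl
    rw [Fin.lastCases_castSucc] at hcoord
    exact hp.rel (α j) hcoord
  have hne : (fun k => k != j) ≠ fun _ => true := fun h => by simpa using congrFun h j
  exact (α j).trans (hj false) ((α j).trans (hδ _ hne) ((α j).symm (hj true)))

end UpperBound

section LowerBound

variable {A : Algebra σ} {n : ℕ}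

/-- The last argument of `p` is irrelevant as soon as the argument number `j` equals `a`. -/
def CollapsesAt {β : Type*} (p : (Fin (n + 1) → β) → β) (a : β) (j : Fin n) : Prop :=
  ∀ (y : Fin n → β) (x x' : β), y j = a → p (Fin.snoc y x) = p (Fin.snoc y x')

theorem chooseVec_id_lastCases {β : Type} (a b : Fin (n + 1) → β) (c : Bool) (ε : Fin n → Bool) :
    chooseVec id a b (Fin.lastCases (motive := fun _ => Bool) c ε) =
      Fin.snoc (fun j => if ε j then b j.castSucc else a j.castSucc)
        (if c then b (Fin.last n) else a (Fin.last n)) := by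
  ext i
  induction i using Fin.lastCases with
  | last => simp [chooseVec]
  | cast j => simp [chooseVec]

section SubstLast

variable {p : (Fin (n + 1) → A.carrier) → A.carrier} {a : A.carrier} {t : Term σ (Fin 3)}

/-- The operation `p(y, t(a, x, yⱼ))` obtained from `p(y, x)`. For a Jónsson term `t` it
collapses at `j`. -/
def substLast (p : (Fin (n + 1) → A.carrier) → A.carrier) (a : A.carrier) (t : Term σ (Fin 3))
    (j : Fin n) (v : Fin (n + 1) → A.carrier) : A.carrier :=
  p (Fin.snoc (Fin.init v) (t.eval A ![a, v (Fin.last n), v j.castSucc]))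

theorem substLast_snoc (j : Fin n) (y : Fin n → A.carrier) (x : A.carrier) :
    substLast p a t j (Fin.snoc y x) = p (Fin.snoc y (t.eval A ![a, x, y j])) := by
  simp only [substLast, Fin.init_snoc, Fin.snoc_last, Fin.snoc_castSucc]

theorem IsPolynomial.substLast (hp : IsPolynomial A p) (a : A.carrier) (t : Term σ (Fin 3))
    (j : Fin n) : IsPolynomial A (substLast p a t j) := by
  refine hp.comp fun i => ?_
  induction i using Fin.lastCases with
  | cast i => simpa only [Fin.snoc_castSucc] using .proj i.castSucc
  | last =>
    simp only [Fin.snoc_last]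
    refine t.isPolynomial_eval fun k => ?_
    fin_cases k
    exacts [.const a, .proj (Fin.last n), .proj j.castSucc]

theorem collapsesAt_substLast (ht : ∀ z, t.eval A ![a, z, a] = a) (j : Fin n) :
    CollapsesAt (substLast p a t j) a j := fun y x x' hy => by
  rw [substLast_snoc, substLast_snoc, hy, ht, ht]

theorem CollapsesAt.substLast {i : Fin n} (h : CollapsesAt p a i) (j : Fin n) :
    CollapsesAt (substLast p a t j) a i := fun y x x' hy => by
  rw [substLast_snoc, substLast_snoc]
  exact h y _ _ hy

end SubstLast

variable {α : Fin n → Con A} {β δ : Con A} {a b : A.carrier}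

theorem Centralizes.rel_of_collapsesAt (hC : Centralizes α β δ) (hα : ∀ j, (α j).r a b)
    (hβ : β.r a b) {p : (Fin (n + 1) → A.carrier) → A.carrier} (hp : IsPolynomial A p)
    (hcol : ∀ j, CollapsesAt p a j) :
    δ.r (p (Fin.snoc (fun _ => b) a)) (p (Fin.snoc (fun _ => b) b)) := by
  have h := hC (n + 1) p hp id (fun _ => a) (fun _ => b)
  simp only [chooseVec_id_lastCases] at h
  refine h (fun i => ?_) fun ε hε => ?_
  · induction i using Fin.lastCases with
    | last => simpa using hβ
    | cast j => simpa using hα j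
  · obtain ⟨j, hj⟩ := Function.ne_iff.1 hε
    rw [hcol j _ _ _ (if_neg hj)]
    exact δ.refl _

theorem Centralizes.rel_of_hasJonssonTerms (hC : Centralizes α β δ) {V : Algebra σ → Prop}
    (hJ : HasJonssonTerms V) (hA : V A) (hα : ∀ j, (α j).r a b) (hβ : β.r a b) : δ.r a b := by
  suffices H : ∀ (R : Finset (Fin n)) (p : (Fin (n + 1) → A.carrier) → A.carrier),
      IsPolynomial A p → (∀ j ∉ R, CollapsesAt p a j) →
      δ.r (p (Fin.snoc (fun _ => b) a)) (p (Fin.snoc (fun _ => b) b)) by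
    simpa using H Finset.univ _ (.proj (Fin.last n)) (by simp)
  intro R
  induction R using Finset.induction_on with
  | empty => exact fun p hp hcol => hC.rel_of_collapsesAt hα hβ hp (by simpa using hcol)
  | insert j R _ ih =>
    intro p hp hcol
    refine hJ.rel hA (δ.toSetoid.comap fun u => p (Fin.snoc (fun _ => b) u)) a b fun t ht => ?_
    have hind := ih (substLast p a t j) (hp.substLast a t j) fun i hi => by
      obtain rfl | hij := eq_or_ne i j
      · exact collapsesAt_substLast ht i
      · exact (hcol i (by simp [hij, hi])).substLast j
    rwa [substLast_snoc, substLast_snoc] at hind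

end LowerBound

theorem HasJonssonTerms.commutator_eq {V : Algebra σ → Prop} (hJ : HasJonssonTerms V)
    {A : Algebra σ} (hA : V A) {n : ℕ} (α : Fin n → Con A) (β : Con A) :
    commutator α β = Con.inf (Con.sInf (Set.range α)) β := by
  refine Con.ext fun a b => ⟨fun h => ⟨Con.sInf_range_r.2 fun j => ?_, ?_⟩, fun h δ hδ => ?_⟩
  · exact h (α j) (centralizes_left α β j)
  · exact h β (centralizes_right α β)
  · exact hδ.rel_of_hasJonssonTerms hJ hA (Con.sInf_range_r.1 h.1) h.2

theorem congruence_distributive_neutral_general (V : Algebra σ → Prop)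
    (hCD : CongruenceDistributive (freeAlg V (Fin 3))) {A : Algebra σ} (hA : V A) {n : ℕ}
    (α : Fin (n + 1) → Con A) : commList α = Con.sInf (Set.range α) := by
  rw [Con.sInf_range_fin_succ]
  cases n with
  | zero => exact Con.ext fun _ _ => ⟨fun h => ⟨Con.sInf_range_r.2 fun j => j.elim0, h⟩, And.right⟩
  | succ n => exact hCD.hasJonssonTerms.commutator_eq hA _ _

/-- Theorem 4.14 of "On Supernilpotent Algebras": in a congruence distributive
variety, every `n`-commutator (`n ≥ 2`) is neutral. -/
theorem congruence_distributive_neutral {σ : Signature} (V : Algebra σ → Prop)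
    (hV : IsVariety V)
    (hCD : ∀ A : Algebra σ, V A → ∀ α β γ : Con A,
      Con.inf α (Con.sup β γ) = Con.sup (Con.inf α β) (Con.inf α γ)) :
    ∀ n : ℕ, 2 ≤ n → ∀ A : Algebra σ, V A → ∀ α : Fin (n - 1 + 1) → Con A,
      commList α = Con.sInf (Set.range α) := by
  intro n _ A hA α
  exact congruence_distributive_neutral_general V (hCD _ (freeAlg_mem hV (Fin 3))) hA α

end UA
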